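/- Let 0 < q ≤ 1, η > 0, θ ≥ 0, τ ≥ 0, and fix t with t > θ/η + (1−q)/η². Let μ_t be a probability measure on ℝ with finite moments of all orders such that ∫ p_m(y;t) p_n(y;t) μ_t(dy) = 0 whenever m ≠ n. Define k_* = max{k ≥ 0 : t > θ/η + 2τk} if q = 1, and k_* = max{k ≥ 0 : q^{2k} > ((1−q)² + (1−q)ηθ + η²τ)/(η²(t(1−q) + τ))} if 0 < q < 1, and set y_* = max{x_{k_*}(t), x_{k_*+1}(t)}. Then μ_t(ℝ \ ({x_0(t), x_1(t), …, x_{k_*}(t)} ∪ [y_*, ∞))) = 0. -/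

import Mathlib

/-- `[n]_q = 1 + q + ⋯ + q^{n-1}`. -/
noncomputable def qnum (q : ℝ) (n : ℕ) : ℝ := ∑ i ∈ Finset.range n, q ^ i

/-- `[n]_q! = [1]_q [2]_q ⋯ [n]_q`. -/
noncomputable def qfact (q : ℝ) (n : ℕ) : ℝ := ∏ i ∈ Finset.range n, qnum q (i + 1)

/-- q-binomial coefficient `[n choose k]_q`, with the convention that it is `0` for `k > n`. -/
noncomputable def qbinom (q : ℝ) (n k : ℕ) : ℝ :=
  if k ≤ n then qfact q n / (qfact q (n - k) * qfact q k) else 0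

/-- `a_n = η⁻¹ + θ[n]_q + [n]_q² ητ`. -/
noncomputable def aCoef (η θ τ q : ℝ) (n : ℕ) : ℝ :=
  η⁻¹ + θ * qnum q n + (qnum q n) ^ 2 * η * τ

/-- `b_n(t) = (tη + θ + ([n]_q + [n-1]_q)ητ)[n]_q`. -/
noncomputable def bCoef (η θ τ q t : ℝ) (n : ℕ) : ℝ :=
  (t * η + θ + (qnum q n + qnum q (n - 1)) * η * τ) * qnum q n

/-- `c_n(t) = η(t + τ[n-1]_q)[n]_q`. -/
noncomputable def cCoef (η τ q t : ℝ) (n : ℕ) : ℝ :=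
  η * (t + τ * qnum q (n - 1)) * qnum q n

/-- `A_n(x,s) = a_n + q^n x - sη q^n [n]_q`. -/
noncomputable def ACoef (η θ τ q x s : ℝ) (n : ℕ) : ℝ :=
  aCoef η θ τ q n + q ^ n * x - s * η * q ^ n * qnum q n

/-- `x_k(s) = ((sη q^k - θ)[k]_q - η⁻¹ - ητ[k]_q²)/q^k`, the zero of `x ↦ A_k(x,s)`. -/
noncomputable def xPt (η θ τ q s : ℝ) (k : ℕ) : ℝ :=
  ((s * η * q ^ k - θ) * qnum q k - η⁻¹ - η * τ * (qnum q k) ^ 2) / q ^ k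

open MeasureTheory

/-!
With base point `x₀ = -η⁻¹`, the polynomials `(-1)ⁿ p_n` are the Karlin–McGregor polynomials `Q_n`
of a birth–death process with birth rates `a_n` and death rates `c_n(t)`. To the left of `x₀` the
`Q_n` are at least `1` and decreasing. If an orthogonality measure charged `(-∞, z]` for some
`z < x₀`, then `∑ Q_n(z)² / ∫ Q_n²` would converge by Chebyshev's inequality, and the
arithmetic–geometric mean inequality would bound `∑ (a_n c_{n+1})^{-1/4}`, which diverges because
`a_n` and `c_n` grow at most quadratically. Hence the measure vanishes on `(-∞, x₀)`.

The Christoffel transform `(y - x₀) μ(dy)` is then a positive measure, orthogonal for the kernel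
polynomials of the `Q_n`, and these are again Karlin–McGregor polynomials up to normalisation,
with rates `a_{n+1} / q` and `q c_n` and base point `x_1(t)`. Iterating,
`∏_{j < k} (y - x_j(t)) μ(dy)` vanishes on `(-∞, x_k(t))` for every `k`, so `μ` has no mass there
except at the `x_j(t)`, `j < k`. This is applied to `k_*` and `k_* + 1`.
-/

section OrthogonalFamily

variable {ι R A : Type*} [CommRing R] [CommRing A] [Algebra R A] {L : A →ₗ[R] R} {P : ι → A}

/-- A family of elements (typically polynomials) whose products of distinct members are killed by
the functional `L`: orthogonality of polynomials with respect to a moment functional. -/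
def IsOrthogonalFamily (L : A →ₗ[R] R) (P : ι → A) : Prop :=
  Pairwise fun m n => L (P m * P n) = 0

lemma IsOrthogonalFamily.smul (h : IsOrthogonalFamily L P) (r : ι → R) :
    IsOrthogonalFamily L fun n => r n • P n := by
  intro m n hmn
  rw [smul_mul_smul_comm, map_smul, h hmn, smul_zero]

lemma IsOrthogonalFamily.map_sum_smul_sq (h : IsOrthogonalFamily L P) (s : Finset ι) (r : ι → R) :
    L ((∑ n ∈ s, r n • P n) ^ 2) = ∑ n ∈ s, r n ^ 2 * L (P n ^ 2) := by
  rw [sq, Finset.sum_mul_sum, map_sum]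
  refine Finset.sum_congr rfl fun m hm => ?_
  rw [map_sum, Finset.sum_eq_single_of_mem m hm fun n _ hnm => h.smul r hnm.symm,
    smul_mul_smul_comm, map_smul, smul_eq_mul, ← sq, ← sq]

end OrthogonalFamily

lemma rpow_quarter_mul_mul_sq_le {r s w : ℝ} (hr : 0 ≤ r) (hs : 0 ≤ s) (hw : 0 ≤ w) :
    (r * s * w ^ 2) ^ (1 / 4 : ℝ) ≤ (r + s) / 4 + w / 2 := by
  have h : (0 : ℝ) ≤ 1 / 4 := by norm_num
  have hamgm := Real.geom_mean_le_arith_mean4_weighted h h h h hr hs hw hw (by norm_num)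
  rw [sq, ← mul_assoc, Real.mul_rpow (by positivity) hw, Real.mul_rpow (by positivity) hw,
    Real.mul_rpow hr hs]
  linarith

section BirthDeath

open Asymptotics Filter Polynomial Set

mutual

/-- The Karlin–McGregor polynomials `Q_n` of a birth–death process with birth rates `a` and death
rates `c`, based at `x₀`: they satisfy `Q_0 = 1` and
`(x₀ - X) Q_n = a_n (Q_{n+1} - Q_n) - c_n (Q_n - Q_{n-1})`, so that `Q_n(x₀) = 1`. They are built
together with their divided differences `kernelPoly`. -/
noncomputable def birthDeathPoly (a c : ℕ → ℝ) (x₀ : ℝ) : ℕ → ℝ[X]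
  | 0 => 1
  | n + 1 => birthDeathPoly a c x₀ n + (C x₀ - X) * kernelPoly a c x₀ n
termination_by n => (n, 0)

/-- The kernel polynomials `R_n = (Q_{n+1} - Q_n) / (x₀ - X)` of the Karlin–McGregor polynomials
`Q_n`. If the `Q_n` are orthogonal with respect to a measure `M`, the `R_n` are orthogonal with
respect to its Christoffel transform `(y - x₀) M(dy)`. -/
noncomputable def kernelPoly (a c : ℕ → ℝ) (x₀ : ℝ) : ℕ → ℝ[X]
  | 0 => C (a 0)⁻¹
  | n + 1 => C (a (n + 1))⁻¹ *
      (birthDeathPoly a c x₀ (n + 1) + C (c (n + 1)) * kernelPoly a c x₀ n)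
termination_by n => (n, 1)

end

variable {a c : ℕ → ℝ} {x₀ : ℝ}

lemma eval_birthDeathPoly_zero (y : ℝ) : (birthDeathPoly a c x₀ 0).eval y = 1 := by
  rw [birthDeathPoly, eval_one]

lemma eval_birthDeathPoly_succ (y : ℝ) (n : ℕ) : (birthDeathPoly a c x₀ (n + 1)).eval y =
    (birthDeathPoly a c x₀ n).eval y + (x₀ - y) * (kernelPoly a c x₀ n).eval y := by
  simp only [birthDeathPoly, eval_add, eval_mul, eval_sub, eval_C, eval_X]

lemma smul_kernelPoly_zero (ha : a 0 ≠ 0) :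
    a 0 • kernelPoly a c x₀ 0 = birthDeathPoly a c x₀ 0 := by
  rw [kernelPoly, birthDeathPoly, smul_C, smul_eq_mul, mul_inv_cancel₀ ha, C_1]

lemma smul_kernelPoly_succ (n : ℕ) (ha : a (n + 1) ≠ 0) :
    a (n + 1) • kernelPoly a c x₀ (n + 1) =
      birthDeathPoly a c x₀ (n + 1) + c (n + 1) • kernelPoly a c x₀ n := by
  rw [kernelPoly, C_mul', smul_inv_smul₀ ha, C_mul']

lemma eval_kernelPoly_zero (ha : a 0 ≠ 0) (y : ℝ) :
    a 0 * (kernelPoly a c x₀ 0).eval y = 1 := by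
  rw [← smul_eq_mul, ← eval_smul, smul_kernelPoly_zero ha, eval_birthDeathPoly_zero]

lemma eval_kernelPoly_succ (y : ℝ) (n : ℕ) (ha : a (n + 1) ≠ 0) :
    a (n + 1) * (kernelPoly a c x₀ (n + 1)).eval y =
      (birthDeathPoly a c x₀ (n + 1)).eval y + c (n + 1) * (kernelPoly a c x₀ n).eval y := by
  simpa only [eval_smul, eval_add, smul_eq_mul] using
    congrArg (eval y) (smul_kernelPoly_succ (c := c) (x₀ := x₀) n ha)

lemma eq_eval_birthDeathPoly (ha : ∀ n, a n ≠ 0) {y : ℝ} {F : ℕ → ℝ} (h0 : F 0 = 1)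
    (hF : ∀ n, (x₀ - y) * F n = a n * (F (n + 1) - F n) - c n * (F n - F (n - 1))) (n : ℕ) :
    F n = (birthDeathPoly a c x₀ n).eval y := by
  suffices h : F n = (birthDeathPoly a c x₀ n).eval y ∧
      F (n + 1) - F n = (x₀ - y) * (kernelPoly a c x₀ n).eval y from h.1
  induction n with
  | zero =>
    refine ⟨h0.trans (eval_birthDeathPoly_zero y).symm, mul_left_cancel₀ (ha 0) ?_⟩
    linear_combination (x₀ - y) * h0 - (x₀ - y) * eval_kernelPoly_zero (c := c) (x₀ := x₀) (ha 0) y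
      - hF 0
  | succ n ih =>
    have hQ : F (n + 1) = (birthDeathPoly a c x₀ (n + 1)).eval y := by
      linear_combination ih.1 + ih.2 - eval_birthDeathPoly_succ (a := a) (c := c) (x₀ := x₀) y n
    refine ⟨hQ, mul_left_cancel₀ (ha (n + 1)) ?_⟩
    have hFn := hF (n + 1)
    rw [Nat.add_sub_cancel] at hFn
    linear_combination c (n + 1) * ih.2 + (x₀ - y) * hQ - hFn
      - (x₀ - y) * eval_kernelPoly_succ (c := c) (x₀ := x₀) y n (ha _)

lemma one_le_eval_birthDeathPoly_and_eval_kernelPoly_nonneg (ha : ∀ n, 0 < a n)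
    (hc : ∀ n, 0 < c (n + 1)) {y : ℝ} (hy : y ≤ x₀) (n : ℕ) :
    1 ≤ (birthDeathPoly a c x₀ n).eval y ∧ 0 ≤ (kernelPoly a c x₀ n).eval y := by
  induction n with
  | zero =>
    exact ⟨(eval_birthDeathPoly_zero y).ge, nonneg_of_mul_nonneg_right
      ((eval_kernelPoly_zero (ha 0).ne' y).symm ▸ zero_le_one) (ha 0)⟩
  | succ n ih =>
    have hQ : 1 ≤ (birthDeathPoly a c x₀ (n + 1)).eval y := by
      rw [eval_birthDeathPoly_succ]
      exact le_add_of_le_of_nonneg ih.1 (mul_nonneg (sub_nonneg.2 hy) ih.2)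
    refine ⟨hQ, nonneg_of_mul_nonneg_right ?_ (ha (n + 1))⟩
    rw [eval_kernelPoly_succ _ _ (ha _).ne']
    exact add_nonneg (zero_le_one.trans hQ) (mul_nonneg (hc n).le ih.2)

lemma one_le_eval_birthDeathPoly (ha : ∀ n, 0 < a n) (hc : ∀ n, 0 < c (n + 1)) {y : ℝ}
    (hy : y ≤ x₀) (n : ℕ) : 1 ≤ (birthDeathPoly a c x₀ n).eval y :=
  (one_le_eval_birthDeathPoly_and_eval_kernelPoly_nonneg ha hc hy n).1

lemma eval_kernelPoly_nonneg (ha : ∀ n, 0 < a n) (hc : ∀ n, 0 < c (n + 1)) {y : ℝ}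
    (hy : y ≤ x₀) (n : ℕ) : 0 ≤ (kernelPoly a c x₀ n).eval y :=
  (one_le_eval_birthDeathPoly_and_eval_kernelPoly_nonneg ha hc hy n).2

lemma antitoneOn_eval_birthDeathPoly (ha : ∀ n, 0 < a n) (hc : ∀ n, 0 < c (n + 1)) (n : ℕ) :
    AntitoneOn (fun y => (birthDeathPoly a c x₀ n).eval y) (Iic x₀) := by
  intro y hy z hz hyz
  rw [mem_Iic] at hy hz
  suffices h : (birthDeathPoly a c x₀ n).eval z ≤ (birthDeathPoly a c x₀ n).eval y ∧
      (kernelPoly a c x₀ n).eval z ≤ (kernelPoly a c x₀ n).eval y from h.1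
  induction n with
  | zero =>
    rw [eval_birthDeathPoly_zero, eval_birthDeathPoly_zero]
    refine ⟨le_rfl, le_of_mul_le_mul_left ?_ (ha 0)⟩
    rw [eval_kernelPoly_zero (ha 0).ne', eval_kernelPoly_zero (ha 0).ne']
  | succ n ih =>
    have hQ : (birthDeathPoly a c x₀ (n + 1)).eval z ≤ (birthDeathPoly a c x₀ (n + 1)).eval y := by
      rw [eval_birthDeathPoly_succ, eval_birthDeathPoly_succ]
      exact add_le_add ih.1 (mul_le_mul (sub_le_sub_left hyz x₀) ih.2
        (eval_kernelPoly_nonneg ha hc hz n) (sub_nonneg.2 hy))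
    refine ⟨hQ, le_of_mul_le_mul_left ?_ (ha (n + 1))⟩
    rw [eval_kernelPoly_succ _ _ (ha _).ne', eval_kernelPoly_succ _ _ (ha _).ne']
    exact add_le_add hQ (mul_le_mul_of_nonneg_left ih.2 (hc n).le)

section Functional

variable {L : ℝ[X] →ₗ[ℝ] ℝ}

lemma map_kernelPoly_mul_birthDeathPoly_of_lt (hL : IsOrthogonalFamily L (birthDeathPoly a c x₀))
    (ha : ∀ n, a n ≠ 0) {m n : ℕ} (hmn : m < n) :
    L (kernelPoly a c x₀ m * birthDeathPoly a c x₀ n) = 0 := by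
  refine (smul_eq_zero_iff_right (ha m)).1 ?_
  rw [← map_smul, ← smul_mul_assoc]
  induction m with
  | zero => rw [smul_kernelPoly_zero (ha 0), hL hmn.ne]
  | succ m ih =>
    have hRQ := (smul_eq_zero_iff_right (ha m)).1 ((map_smul L _ _).symm.trans
      ((congrArg L (smul_mul_assoc _ _ _)).symm.trans (ih (m.lt_succ_self.trans hmn))))
    rw [smul_kernelPoly_succ _ (ha _), add_mul, map_add, hL hmn.ne, smul_mul_assoc, map_smul, hRQ,
      smul_zero, add_zero]

lemma mul_map_kernelPoly_mul_birthDeathPoly (hL : IsOrthogonalFamily L (birthDeathPoly a c x₀))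
    (ha : ∀ n, a n ≠ 0) (n : ℕ) :
    a n * L (kernelPoly a c x₀ n * birthDeathPoly a c x₀ n) = L (birthDeathPoly a c x₀ n ^ 2) := by
  rw [← smul_eq_mul, ← map_smul, ← smul_mul_assoc]
  cases n with
  | zero => rw [smul_kernelPoly_zero (ha 0), sq]
  | succ n =>
    rw [smul_kernelPoly_succ _ (ha _), add_mul, map_add, smul_mul_assoc, map_smul,
      map_kernelPoly_mul_birthDeathPoly_of_lt hL ha n.lt_succ_self, smul_zero, add_zero, sq]

lemma isOrthogonalFamily_kernelPoly (hL : IsOrthogonalFamily L (birthDeathPoly a c x₀))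
    (ha : ∀ n, a n ≠ 0) :
    IsOrthogonalFamily (L ∘ₗ LinearMap.mulLeft ℝ (X - C x₀)) (kernelPoly a c x₀) := by
  have of_lt {m n : ℕ} (hmn : m < n) :
      L ((X - C x₀) * (kernelPoly a c x₀ m * kernelPoly a c x₀ n)) = 0 := by
    have hmul : (X - C x₀) * (kernelPoly a c x₀ m * kernelPoly a c x₀ n) =
        kernelPoly a c x₀ m * birthDeathPoly a c x₀ n -
          kernelPoly a c x₀ m * birthDeathPoly a c x₀ (n + 1) := by
      rw [birthDeathPoly]
      ring
    rw [hmul, map_sub, map_kernelPoly_mul_birthDeathPoly_of_lt hL ha hmn,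
      map_kernelPoly_mul_birthDeathPoly_of_lt hL ha (hmn.trans n.lt_succ_self), sub_zero]
  intro m n hmn
  rw [LinearMap.comp_apply, LinearMap.mulLeft_apply]
  rcases hmn.lt_or_gt with h | h
  · exact of_lt h
  · rw [mul_comm (kernelPoly a c x₀ m)]
    exact of_lt h

lemma mul_map_birthDeathPoly_sq_succ (hL : IsOrthogonalFamily L (birthDeathPoly a c x₀))
    (ha : ∀ n, a n ≠ 0) (n : ℕ) :
    a n * L (birthDeathPoly a c x₀ (n + 1) ^ 2) = c (n + 1) * L (birthDeathPoly a c x₀ n ^ 2) := by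
  have hRR : L ((birthDeathPoly a c x₀ (n + 1) - birthDeathPoly a c x₀ n) *
      (a (n + 1) • kernelPoly a c x₀ (n + 1))) = 0 := by
    have hdiff : (birthDeathPoly a c x₀ (n + 1) - birthDeathPoly a c x₀ n) *
        (a (n + 1) • kernelPoly a c x₀ (n + 1)) =
        -(a (n + 1) • ((X - C x₀) * (kernelPoly a c x₀ n * kernelPoly a c x₀ (n + 1)))) := by
      rw [birthDeathPoly, mul_smul_comm, ← smul_neg]
      congr 1
      ring
    have horth : L ((X - C x₀) * (kernelPoly a c x₀ n * kernelPoly a c x₀ (n + 1))) = 0 :=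
      isOrthogonalFamily_kernelPoly hL ha n.lt_succ_self.ne
    rw [hdiff, map_neg, map_smul, horth, smul_zero, neg_zero]
  have hexpand : (birthDeathPoly a c x₀ (n + 1) - birthDeathPoly a c x₀ n) *
      (birthDeathPoly a c x₀ (n + 1) + c (n + 1) • kernelPoly a c x₀ n) =
      birthDeathPoly a c x₀ (n + 1) ^ 2 - birthDeathPoly a c x₀ n * birthDeathPoly a c x₀ (n + 1)
        + c (n + 1) • (kernelPoly a c x₀ n * birthDeathPoly a c x₀ (n + 1))
        - c (n + 1) • (kernelPoly a c x₀ n * birthDeathPoly a c x₀ n) := by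
    simp only [smul_eq_C_mul]
    ring
  rw [smul_kernelPoly_succ _ (ha _), hexpand, map_sub, map_add, map_sub, map_smul, map_smul,
    hL n.lt_succ_self.ne, map_kernelPoly_mul_birthDeathPoly_of_lt hL ha n.lt_succ_self,
    smul_zero, smul_eq_mul] at hRR
  linear_combination a n * hRR + c (n + 1) * mul_map_kernelPoly_mul_birthDeathPoly hL ha n

lemma map_birthDeathPoly_sq_pos (hL : IsOrthogonalFamily L (birthDeathPoly a c x₀))
    (ha : ∀ n, 0 < a n) (hc : ∀ n, 0 < c (n + 1)) (h1 : 0 < L 1) (n : ℕ) :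
    0 < L (birthDeathPoly a c x₀ n ^ 2) := by
  induction n with
  | zero => rwa [birthDeathPoly, one_pow]
  | succ n ih =>
    refine pos_of_mul_pos_right ?_ (ha n).le
    rw [mul_map_birthDeathPoly_sq_succ hL fun n => (ha n).ne']
    exact mul_pos (hc n) ih

lemma map_birthDeathPoly_sq_le (hL : IsOrthogonalFamily L (birthDeathPoly a c x₀))
    (ha : ∀ n, 0 < a n) (hc : ∀ n, 0 < c (n + 1)) (h1 : 0 < L 1) {z : ℝ} (hz : z ≤ x₀) (n : ℕ) :
    L (birthDeathPoly a c x₀ n ^ 2) ≤ L 1 * (a n * (kernelPoly a c x₀ n).eval z) := by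
  induction n with
  | zero => rw [eval_kernelPoly_zero (ha 0).ne', birthDeathPoly, one_pow, mul_one]
  | succ n ih =>
    refine le_of_mul_le_mul_left ?_ (ha n)
    calc a n * L (birthDeathPoly a c x₀ (n + 1) ^ 2)
        = c (n + 1) * L (birthDeathPoly a c x₀ n ^ 2) :=
          mul_map_birthDeathPoly_sq_succ hL (fun n => (ha n).ne') n
      _ ≤ c (n + 1) * (L 1 * (a n * (kernelPoly a c x₀ n).eval z)) :=
          mul_le_mul_of_nonneg_left ih (hc n).le
      _ = a n * (L 1 * (c (n + 1) * (kernelPoly a c x₀ n).eval z)) := by ring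
      _ ≤ a n * (L 1 * (a (n + 1) * (kernelPoly a c x₀ (n + 1)).eval z)) := by
          rw [eval_kernelPoly_succ _ _ (ha _).ne']
          have hQ := one_le_eval_birthDeathPoly ha hc hz (n + 1)
          exact mul_le_mul_of_nonneg_left
            (mul_le_mul_of_nonneg_left (by linarith) h1.le) (ha n).le

lemma div_eval_birthDeathPoly_le (hL : IsOrthogonalFamily L (birthDeathPoly a c x₀))
    (ha : ∀ n, 0 < a n) (hc : ∀ n, 0 < c (n + 1)) (h1 : 0 < L 1) {z : ℝ} (hz : z < x₀) (n : ℕ) :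
    L (birthDeathPoly a c x₀ n ^ 2) /
        (a n * (birthDeathPoly a c x₀ n).eval z * (birthDeathPoly a c x₀ (n + 1)).eval z) ≤
      L 1 / (x₀ - z) *
        (1 / (birthDeathPoly a c x₀ n).eval z - 1 / (birthDeathPoly a c x₀ (n + 1)).eval z) := by
  have han : 0 < a n := ha n
  have hδ : 0 < x₀ - z := sub_pos.2 hz
  have hQ := zero_lt_one.trans_le (one_le_eval_birthDeathPoly ha hc hz.le n)
  have hQ' := zero_lt_one.trans_le (one_le_eval_birthDeathPoly ha hc hz.le (n + 1))
  have hdiff : (birthDeathPoly a c x₀ (n + 1)).eval z - (birthDeathPoly a c x₀ n).eval z =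
      (x₀ - z) * (kernelPoly a c x₀ n).eval z :=
    sub_eq_of_eq_add' (eval_birthDeathPoly_succ z n)
  have hrw : L 1 / (x₀ - z) *
      (1 / (birthDeathPoly a c x₀ n).eval z - 1 / (birthDeathPoly a c x₀ (n + 1)).eval z) =
      L 1 * (a n * (kernelPoly a c x₀ n).eval z) /
        (a n * (birthDeathPoly a c x₀ n).eval z * (birthDeathPoly a c x₀ (n + 1)).eval z) := by
    rw [div_sub_div _ _ hQ.ne' hQ'.ne', one_mul, mul_one, hdiff]
    field_simp
  rw [hrw]
  exact div_le_div_of_nonneg_right (map_birthDeathPoly_sq_le hL ha hc h1 hz.le n) (by positivity)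

-- The product of `Q_n(z)² / h_n`, `Q_{n+1}(z)² / h_{n+1}` and the square of
-- `h_n / (a_n Q_n(z) Q_{n+1}(z))`, where `h_n = L (Q_n²)`, is `(a_n c_{n+1})⁻¹`.
lemma mul_rpow_neg_quarter_le (hL : IsOrthogonalFamily L (birthDeathPoly a c x₀))
    (ha : ∀ n, 0 < a n) (hc : ∀ n, 0 < c (n + 1)) (h1 : 0 < L 1) {z : ℝ} (hz : z < x₀) (n : ℕ) :
    (a n * c (n + 1)) ^ (-1 / 4 : ℝ) ≤
      ((birthDeathPoly a c x₀ n).eval z ^ 2 / L (birthDeathPoly a c x₀ n ^ 2)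
        + (birthDeathPoly a c x₀ (n + 1)).eval z ^ 2 / L (birthDeathPoly a c x₀ (n + 1) ^ 2)) / 4
      + L 1 / (x₀ - z) * (1 / (birthDeathPoly a c x₀ n).eval z -
        1 / (birthDeathPoly a c x₀ (n + 1)).eval z) / 2 := by
  have han : 0 < a n := ha n
  have hcn : 0 < c (n + 1) := hc n
  have hQ := zero_lt_one.trans_le (one_le_eval_birthDeathPoly ha hc hz.le n)
  have hQ' := zero_lt_one.trans_le (one_le_eval_birthDeathPoly ha hc hz.le (n + 1))
  have hnorm := mul_map_birthDeathPoly_sq_succ hL (fun n => (ha n).ne') n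
  have hle := div_eval_birthDeathPoly_le hL ha hc h1 hz n
  have hh := map_birthDeathPoly_sq_pos hL ha hc h1 n
  have hh' := map_birthDeathPoly_sq_pos hL ha hc h1 (n + 1)
  set Q := (birthDeathPoly a c x₀ n).eval z
  set Q' := (birthDeathPoly a c x₀ (n + 1)).eval z
  set h := L (birthDeathPoly a c x₀ n ^ 2)
  set h' := L (birthDeathPoly a c x₀ (n + 1) ^ 2)
  have hprod : (a n * c (n + 1))⁻¹ = Q ^ 2 / h * (Q' ^ 2 / h') * (h / (a n * Q * Q')) ^ 2 := by
    rw [show c (n + 1) = a n * h' / h by rw [hnorm, mul_div_cancel_right₀ _ hh.ne']]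
    field_simp
  calc (a n * c (n + 1)) ^ (-1 / 4 : ℝ) = ((a n * c (n + 1))⁻¹) ^ (1 / 4 : ℝ) := by
        rw [Real.inv_rpow (by positivity), ← Real.rpow_neg (by positivity), neg_div]
    _ ≤ (Q ^ 2 / h + Q' ^ 2 / h') / 4 + h / (a n * Q * Q') / 2 := by
        rw [hprod]
        exact rpow_quarter_mul_mul_sq_le (by positivity) (by positivity) (by positivity)
    _ ≤ _ := by gcongr

end Functional

lemma ofReal_sub_smul_eval_ae_eq {M : Measure ℝ} (hMx₀ : M (Iio x₀) = 0) (P : ℝ[X]) :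
    (fun y => (ENNReal.ofReal (y - x₀)).toReal • P.eval y) =ᵐ[M]
      fun y => ((X - C x₀) * P).eval y := by
  filter_upwards [measure_eq_zero_iff_ae_notMem.1 hMx₀] with y hy
  rw [ENNReal.toReal_ofReal (sub_nonneg.2 (not_lt.1 hy))]
  simp

/-- The measure `M` has all its moments, and they are given by the moment functional `L`. -/
structure Represents (M : Measure ℝ) (L : ℝ[X] →ₗ[ℝ] ℝ) : Prop where
  integrable_eval : ∀ P : ℝ[X], Integrable (fun y => P.eval y) M
  integral_eval : ∀ P : ℝ[X], ∫ y, P.eval y ∂M = L P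

lemma exists_represents {M : Measure ℝ} (hM : ∀ n : ℕ, Integrable (fun y : ℝ => |y| ^ n) M) :
    ∃ L, Represents M L := by
  have hint (P : ℝ[X]) : Integrable (fun y => P.eval y) M := by
    simp only [eval_eq_sum_range]
    refine integrable_finsetSum _ fun n _ => Integrable.const_mul ?_ _
    exact (hM n).mono' (by fun_prop) (.of_forall fun y => (norm_pow y n).le)
  refine ⟨IsLinearMap.mk' (fun P => ∫ y, P.eval y ∂M) ⟨fun P S => ?_, fun r P => ?_⟩, hint,
    fun _ => rfl⟩
  · simp only [eval_add]
    exact integral_add (hint P) (hint S)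
  · simp only [eval_smul]
    exact integral_smul r _

namespace Represents

variable {M : Measure ℝ} {L : ℝ[X] →ₗ[ℝ] ℝ}

lemma isFiniteMeasure (hM : Represents M L) : IsFiniteMeasure M :=
  (integrable_const_iff_isFiniteMeasure one_ne_zero).1 <| by
    simpa only [eval_one] using hM.integrable_eval 1

lemma map_one (hM : Represents M L) : L 1 = M.real univ := by
  simp [← hM.integral_eval]

lemma withDensity_sub (hM : Represents M L) (hMx₀ : M (Iio x₀) = 0) :
    Represents (M.withDensity fun y => ENNReal.ofReal (y - x₀))
      (L ∘ₗ LinearMap.mulLeft ℝ (X - C x₀)) where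
  integrable_eval P := by
    rw [integrable_withDensity_iff_integrable_smul' (by fun_prop) (by simp)]
    exact (hM.integrable_eval _).congr (ofReal_sub_smul_eval_ae_eq hMx₀ P).symm
  integral_eval P := by
    rw [integral_withDensity_eq_integral_toReal_smul (by fun_prop) (by simp),
      integral_congr_ae (ofReal_sub_smul_eval_ae_eq hMx₀ P), hM.integral_eval]
    rfl

-- Chebyshev's inequality for the square of the Christoffel–Darboux kernel
-- `K(y) = ∑ n < N, Q_n(z) Q_n(y) / h_n`, which has integral `K(z)` and is at least `K(z)²` on
-- `(-∞, z]`.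
lemma measureReal_Iic_mul_sum_le (hM : Represents M L)
    (hL : IsOrthogonalFamily L (birthDeathPoly a c x₀)) (ha : ∀ n, 0 < a n)
    (hc : ∀ n, 0 < c (n + 1)) (h1 : 0 < L 1) {z : ℝ} (hz : z ≤ x₀) (N : ℕ) :
    M.real (Iic z) * ∑ n ∈ Finset.range N,
      (birthDeathPoly a c x₀ n).eval z ^ 2 / L (birthDeathPoly a c x₀ n ^ 2) ≤ 1 := by
  have := hM.isFiniteMeasure
  set κ := ∑ n ∈ Finset.range N,
    (birthDeathPoly a c x₀ n).eval z ^ 2 / L (birthDeathPoly a c x₀ n ^ 2) with hκ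
  let K : ℝ[X] := ∑ n ∈ Finset.range N,
    ((birthDeathPoly a c x₀ n).eval z / L (birthDeathPoly a c x₀ n ^ 2)) • birthDeathPoly a c x₀ n
  have hpos := map_birthDeathPoly_sq_pos hL ha hc h1
  have hκ0 : 0 ≤ κ := Finset.sum_nonneg fun n _ => div_nonneg (sq_nonneg _) (hpos n).le
  have hintegral : ∫ y, (K ^ 2).eval y ∂M = κ := by
    rw [hM.integral_eval, hL.map_sum_smul_sq]
    refine Finset.sum_congr rfl fun n _ => ?_
    have := (hpos n).ne'
    field_simp
  have hsubset : Iic z ⊆ {y | κ ^ 2 ≤ (K ^ 2).eval y} := by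
    intro y hy
    rw [mem_ofPred_eq, eval_pow]
    refine pow_le_pow_left₀ hκ0 ?_ 2
    simp only [K, hκ, eval_finsetSum, eval_smul, smul_eq_mul]
    refine Finset.sum_le_sum fun n _ => ?_
    rw [sq, mul_div_right_comm]
    exact mul_le_mul_of_nonneg_left
      (antitoneOn_eval_birthDeathPoly ha hc n (le_trans hy hz) hz hy)
      (div_nonneg (zero_le_one.trans (one_le_eval_birthDeathPoly ha hc hz n)) (hpos n).le)
  have hchebyshev : κ ^ 2 * M.real (Iic z) ≤ κ :=
    calc κ ^ 2 * M.real (Iic z) ≤ κ ^ 2 * M.real {y | κ ^ 2 ≤ (K ^ 2).eval y} :=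
          mul_le_mul_of_nonneg_left (measureReal_mono hsubset) (sq_nonneg κ)
      _ ≤ ∫ y, (K ^ 2).eval y ∂M := mul_meas_ge_le_integral_of_nonneg
          (.of_forall fun y => (sq_nonneg (K.eval y)).trans_eq (eval_pow 2).symm)
          (hM.integrable_eval _) _
      _ = κ := hintegral
  rcases hκ0.eq_or_lt with h | h
  · rw [← h, mul_zero]
    exact zero_le_one
  · exact le_of_mul_le_mul_left (by linarith) h

lemma measure_Iic_eq_zero (hM : Represents M L)
    (hL : IsOrthogonalFamily L (birthDeathPoly a c x₀)) (ha : ∀ n, 0 < a n)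
    (hc : ∀ n, 0 < c (n + 1)) (hcarleman : ¬Summable fun n => (a n * c (n + 1)) ^ (-1 / 4 : ℝ))
    {z : ℝ} (hz : z < x₀) : M (Iic z) = 0 := by
  have := hM.isFiniteMeasure
  contrapose! hcarleman with hne
  have hIic : 0 < M.real (Iic z) := ENNReal.toReal_pos hne (measure_ne_top _ _)
  have h1 : 0 < L 1 := hM.map_one ▸ hIic.trans_le (measureReal_mono (subset_univ _))
  have hQ (n : ℕ) := one_le_eval_birthDeathPoly ha hc hz.le n
  have hsquares : Summable fun n =>
      (birthDeathPoly a c x₀ n).eval z ^ 2 / L (birthDeathPoly a c x₀ n ^ 2) :=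
    summable_of_sum_range_le
      (fun n => div_nonneg (sq_nonneg _) (map_birthDeathPoly_sq_pos hL ha hc h1 n).le)
      fun N => (le_div_iff₀' hIic).2 (hM.measureReal_Iic_mul_sum_le hL ha hc h1 hz.le N)
  have htelescope : Summable fun n =>
      1 / (birthDeathPoly a c x₀ n).eval z - 1 / (birthDeathPoly a c x₀ (n + 1)).eval z := by
    refine summable_of_sum_range_le (c := 1) (fun n => sub_nonneg.2 ?_) fun N => ?_
    · refine one_div_le_one_div_of_le (zero_lt_one.trans_le (hQ n)) ?_
      rw [eval_birthDeathPoly_succ]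
      exact le_add_of_nonneg_right
        (mul_nonneg (sub_nonneg.2 hz.le) (eval_kernelPoly_nonneg ha hc hz.le n))
    · rw [Finset.sum_range_sub' fun n => 1 / (birthDeathPoly a c x₀ n).eval z,
        eval_birthDeathPoly_zero, div_one]
      exact sub_le_self 1 (one_div_nonneg.2 (zero_le_one.trans (hQ N)))
  exact .of_nonneg_of_le (fun n => Real.rpow_nonneg (mul_pos (ha n) (hc n)).le _)
    (mul_rpow_neg_quarter_le hL ha hc h1 hz)
    (((hsquares.add ((summable_nat_add_iff 1).2 hsquares)).div_const 4).add
      ((htelescope.mul_left _).div_const 2))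

lemma measure_Iio_eq_zero (hM : Represents M L)
    (hL : IsOrthogonalFamily L (birthDeathPoly a c x₀)) (ha : ∀ n, 0 < a n)
    (hc : ∀ n, 0 < c (n + 1)) (hcarleman : ¬Summable fun n => (a n * c (n + 1)) ^ (-1 / 4 : ℝ)) :
    M (Iio x₀) = 0 := by
  obtain ⟨u, -, hu, hlim⟩ := exists_seq_strictMono_tendsto x₀
  rw [← iUnion_Iic_eq_Iio_of_lt_of_tendsto hu hlim]
  exact measure_iUnion_null fun n => hM.measure_Iic_eq_zero hL ha hc hcarleman (hu n)

end Represents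

lemma restrict_compl_singleton_absolutelyContinuous {M : Measure ℝ} (hM : M (Iio x₀) = 0) :
    M.restrict {x₀}ᶜ ≪ M.withDensity fun y => ENNReal.ofReal (y - x₀) := by
  have hne : ∀ᵐ y ∂M.restrict {x₀}ᶜ, ENNReal.ofReal (y - x₀) ≠ 0 := by
    rw [ae_restrict_iff' (measurableSet_singleton x₀).compl]
    filter_upwards [measure_eq_zero_iff_ae_notMem.1 hM] with y hy hyx₀
    exact (ENNReal.ofReal_pos.2 (sub_pos.2 (lt_of_le_of_ne (not_lt.1 hy) (Ne.symm hyx₀)))).ne'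
  refine (withDensity_absolutelyContinuous' (by fun_prop) hne).trans ?_
  rw [← restrict_withDensity (measurableSet_singleton x₀).compl]
  exact Measure.absolutelyContinuous_of_le Measure.restrict_le_self

section ChristoffelTransform

lemma mul_eval_kernelPoly (ha : ∀ n, a n ≠ 0) (hc0 : c 0 = 0) (y : ℝ) (n : ℕ) :
    a n * (kernelPoly a c x₀ n).eval y =
      (birthDeathPoly a c x₀ n).eval y + c n * (kernelPoly a c x₀ (n - 1)).eval y := by
  cases n with
  | zero => rw [eval_kernelPoly_zero (ha 0), eval_birthDeathPoly_zero, hc0, zero_mul, add_zero]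
  | succ n => exact eval_kernelPoly_succ y n (ha _)

lemma sub_mul_eval_kernelPoly (ha : ∀ n, a n ≠ 0) (hc0 : c 0 = 0) (y : ℝ) (n : ℕ) :
    (x₀ - y) * (kernelPoly a c x₀ n).eval y =
      a (n + 1) * (kernelPoly a c x₀ (n + 1)).eval y
        - (a n + c (n + 1)) * (kernelPoly a c x₀ n).eval y
        + c n * (kernelPoly a c x₀ (n - 1)).eval y := by
  linear_combination mul_eval_kernelPoly (x₀ := x₀) ha hc0 y n
    - eval_kernelPoly_succ (c := c) (x₀ := x₀) y n (ha _)
    - eval_birthDeathPoly_succ (a := a) (c := c) (x₀ := x₀) y n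

variable {q x₁ : ℝ}

lemma birthDeathPoly_eq_smul_kernelPoly (ha : ∀ n, a n ≠ 0) (hc0 : c 0 = 0) (hq : q ≠ 0)
    (hx : ∀ n, x₁ + a (n + 1) / q + q * c n = x₀ + a n + c (n + 1)) :
    birthDeathPoly (fun n => a (n + 1) / q) (fun n => q * c n) x₁ =
      fun n => (a 0 * q ^ n) • kernelPoly a c x₀ n := by
  refine funext fun n => Polynomial.funext fun y => ?_
  simp only [eval_smul, smul_eq_mul]
  refine (eq_eval_birthDeathPoly (F := fun n => a 0 * q ^ n * (kernelPoly a c x₀ n).eval y)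
    (fun n => div_ne_zero (ha (n + 1)) hq) ?_ (fun n => ?_) n).symm
  · rw [pow_zero, mul_one, eval_kernelPoly_zero (ha 0)]
  · have hpred : c n * (q * q ^ (n - 1)) = c n * q ^ n := by
      cases n with
      | zero => rw [hc0, zero_mul, zero_mul]
      | succ n => rw [Nat.add_sub_cancel, pow_succ']
    have hdiv : a (n + 1) / q * q ^ (n + 1) = a (n + 1) * q ^ n := by
      rw [pow_succ', ← mul_assoc, div_mul_cancel₀ _ hq]
    linear_combination a 0 * q ^ n * sub_mul_eval_kernelPoly (x₀ := x₀) ha hc0 y n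
      + a 0 * q ^ n * (kernelPoly a c x₀ n).eval y * hx n
      - a 0 * (kernelPoly a c x₀ (n + 1)).eval y * hdiv
      - a 0 * (kernelPoly a c x₀ (n - 1)).eval y * hpred

lemma IsOrthogonalFamily.christoffel {L : ℝ[X] →ₗ[ℝ] ℝ}
    (hL : IsOrthogonalFamily L (birthDeathPoly a c x₀)) (ha : ∀ n, a n ≠ 0) (hc0 : c 0 = 0)
    (hq : q ≠ 0) (hx : ∀ n, x₁ + a (n + 1) / q + q * c n = x₀ + a n + c (n + 1)) :
    IsOrthogonalFamily (L ∘ₗ LinearMap.mulLeft ℝ (X - C x₀))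
      (birthDeathPoly (fun n => a (n + 1) / q) (fun n => q * c n) x₁) := by
  rw [birthDeathPoly_eq_smul_kernelPoly ha hc0 hq hx]
  exact (isOrthogonalFamily_kernelPoly hL ha).smul _

end ChristoffelTransform

section Iteration

variable {x : ℕ → ℝ} {q : ℝ} {μ : Measure ℝ} {L : ℝ[X] →ₗ[ℝ] ℝ}

-- `M` is the measure `∏ j < k, (y - x j) μ(dy)`.
lemma exists_iterated_christoffel (hq : 0 < q) (ha : ∀ n, 0 < a n) (hc0 : c 0 = 0)
    (hc : ∀ n, 0 < c (n + 1))
    (hx : ∀ k n, x (k + 1) + a (n + (k + 1)) / q ^ (k + 1) + q ^ (k + 1) * c n =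
      x k + a (n + k) / q ^ k + q ^ k * c (n + 1))
    (hcarleman : ∀ k, ¬Summable fun n => (a (n + k) * c (n + 1)) ^ (-1 / 4 : ℝ))
    (hμ : Represents μ L) (hL : IsOrthogonalFamily L (birthDeathPoly a c (x 0))) (k : ℕ) :
    ∃ M : Measure ℝ, M (Iio (x k)) = 0 ∧ μ.restrict (x '' Iio k)ᶜ ≪ M ∧
      ∃ L', Represents M L' ∧ IsOrthogonalFamily L'
        (birthDeathPoly (fun n => a (n + k) / q ^ k) (fun n => q ^ k * c n) (x k)) := by
  have ha' (k n : ℕ) : 0 < a (n + k) / q ^ k := div_pos (ha _) (pow_pos hq k)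
  have hc' (k n : ℕ) : 0 < q ^ k * c (n + 1) := mul_pos (pow_pos hq k) (hc n)
  have hcarleman' (k : ℕ) :
      ¬Summable fun n => (a (n + k) / q ^ k * (q ^ k * c (n + 1))) ^ (-1 / 4 : ℝ) := by
    simpa only [← mul_assoc, div_mul_cancel₀ _ (pow_pos hq k).ne'] using hcarleman k
  induction k with
  | zero =>
    have hL0 : IsOrthogonalFamily L
        (birthDeathPoly (fun n => a (n + 0) / q ^ 0) (fun n => q ^ 0 * c n) (x 0)) := by
      simpa only [add_zero, pow_zero, div_one, one_mul] using hL
    exact ⟨μ, hμ.measure_Iio_eq_zero hL0 (ha' 0) (hc' 0) (hcarleman' 0),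
      Measure.absolutelyContinuous_of_le Measure.restrict_le_self, L, hμ, hL0⟩
  | succ k ih =>
    obtain ⟨M, hM0, hμM, L', hM, hL'⟩ := ih
    have hM' := hM.withDensity_sub hM0
    have hL'' := hL'.christoffel (x₁ := x (k + 1)) (fun n => (ha' k n).ne')
        (by rw [hc0, mul_zero]) hq.ne' fun n => by
      rw [div_div, ← pow_succ, ← mul_assoc, ← pow_succ', add_right_comm n 1 k, add_assoc n k 1]
      exact hx k n
    simp only [div_div, ← pow_succ, ← mul_assoc, ← pow_succ', add_right_comm _ 1 k,
      add_assoc] at hL''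
    refine ⟨_, hM'.measure_Iio_eq_zero hL'' (ha' _) (hc' _) (hcarleman' _), ?_, _, hM', hL''⟩
    have hset : (x '' Iio (k + 1))ᶜ = {x k}ᶜ ∩ (x '' Iio k)ᶜ := by
      rw [← Order.succ_eq_add_one, Order.Iio_succ, ← Iio_insert, image_insert_eq, insert_eq,
        compl_union]
    rw [hset, ← Measure.restrict_restrict (measurableSet_singleton _).compl]
    exact (hμM.restrict _).trans (restrict_compl_singleton_absolutelyContinuous hM0)

theorem measure_Iio_diff_image_eq_zero (hq : 0 < q) (ha : ∀ n, 0 < a n) (hc0 : c 0 = 0)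
    (hc : ∀ n, 0 < c (n + 1))
    (hx : ∀ k n, x (k + 1) + a (n + (k + 1)) / q ^ (k + 1) + q ^ (k + 1) * c n =
      x k + a (n + k) / q ^ k + q ^ k * c (n + 1))
    (hcarleman : ∀ k, ¬Summable fun n => (a (n + k) * c (n + 1)) ^ (-1 / 4 : ℝ))
    (hμ : Represents μ L) (hL : IsOrthogonalFamily L (birthDeathPoly a c (x 0))) (k : ℕ) :
    μ (Iio (x k) \ x '' Iio k) = 0 := by
  obtain ⟨M, hM0, hμM, -⟩ := exists_iterated_christoffel hq ha hc0 hc hx hcarleman hμ hL k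
  rw [sdiff_eq, ← Measure.restrict_apply measurableSet_Iio]
  exact hμM hM0

end Iteration

lemma isBigO_const_natCast (r : ℝ) : (fun _ => r) =O[atTop] fun n : ℕ => (n : ℝ) :=
  ((isLittleO_const_id_atTop r).comp_tendsto tendsto_natCast_atTop_atTop).isBigO

lemma not_summable_mul_rpow_neg_quarter (ha : ∀ n, 0 < a n) (hc : ∀ n, 0 < c (n + 1))
    (haO : a =O[atTop] fun n => (n : ℝ) ^ 2) (hcO : c =O[atTop] fun n => (n : ℝ) ^ 2) (k : ℕ) :
    ¬Summable fun n => (a (n + k) * c (n + 1)) ^ (-1 / 4 : ℝ) := by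
  have hshift (j : ℕ) : (fun n : ℕ => ((n + j : ℕ) : ℝ) ^ 2) =O[atTop] fun n => (n : ℝ) ^ 2 := by
    simp only [Nat.cast_add]
    exact ((isBigO_refl _ _).add (isBigO_const_natCast j)).pow 2
  have hprod : (fun n => a (n + k) * c (n + 1)) =O[atTop] fun n => (n : ℝ) ^ 4 := by
    have := ((haO.comp_tendsto (tendsto_add_atTop_nat k)).trans (hshift k)).mul
      ((hcO.comp_tendsto (tendsto_add_atTop_nat 1)).trans (hshift 1))
    simpa only [Function.comp_def, ← pow_add] using this
  have hroot : (fun n => (a (n + k) * c (n + 1)) ^ (1 / 4 : ℝ)) =O[atTop] fun n => (n : ℝ) := by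
    refine (hprod.rpow (by norm_num) (.of_forall fun n => by positivity)).congr_right fun n => ?_
    rw [← Real.rpow_natCast_mul n.cast_nonneg]
    norm_num
  intro h
  refine Real.not_summable_natCast_inv (summable_of_isBigO_nat h ?_)
  refine (hroot.inv_rev (.of_forall fun n hn => ?_)).congr_right fun n => ?_
  · exact absurd hn (Real.rpow_pos_of_pos (mul_pos (ha _) (hc n)) _).ne'
  · rw [← Real.rpow_neg (mul_pos (ha _) (hc n)).le, neg_div]

lemma qnum_zero (q : ℝ) : qnum q 0 = 0 := Finset.sum_range_zero _

lemma qnum_succ (q : ℝ) (n : ℕ) : qnum q (n + 1) = qnum q n + q ^ n :=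
  Finset.sum_range_succ _ n

lemma qnum_add (q : ℝ) (n k : ℕ) : qnum q (n + k) = qnum q k + q ^ k * qnum q n := by
  simp only [qnum, add_comm n k, Finset.sum_range_add, Finset.mul_sum, pow_add]

lemma qnum_succ' (q : ℝ) (n : ℕ) : qnum q (n + 1) = 1 + q * qnum q n := by
  rw [qnum_add, qnum_succ, qnum_zero, pow_zero, pow_one, zero_add]

lemma mul_qnum_pred_mul_qnum (q : ℝ) (n : ℕ) :
    q * qnum q (n - 1) * qnum q n = (qnum q n - 1) * qnum q n := by
  cases n with
  | zero => rw [qnum_zero, mul_zero, mul_zero]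
  | succ n => rw [Nat.add_sub_cancel, qnum_succ', add_sub_cancel_left]

lemma qnum_nonneg {q : ℝ} (hq : 0 ≤ q) (n : ℕ) : 0 ≤ qnum q n :=
  Finset.sum_nonneg fun i _ => pow_nonneg hq i

lemma qnum_le {q : ℝ} (hq0 : 0 ≤ q) (hq1 : q ≤ 1) (n : ℕ) : qnum q n ≤ n := by
  simpa [qnum] using Finset.sum_le_card_nsmul (Finset.range n) (q ^ ·) 1
    fun i _ => pow_le_one₀ hq0 hq1

section Coefficients

variable {η θ τ q t : ℝ}

lemma aCoef_pos (hq : 0 ≤ q) (hη : 0 < η) (hθ : 0 ≤ θ) (hτ : 0 ≤ τ) (n : ℕ) :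
    0 < aCoef η θ τ q n := by
  have := qnum_nonneg hq n
  unfold aCoef
  positivity

lemma cCoef_zero : cCoef η τ q t 0 = 0 := by
  rw [cCoef, qnum_zero, mul_zero]

lemma cCoef_pos (hq : 0 ≤ q) (hη : 0 < η) (hτ : 0 ≤ τ) (ht : 0 < t) (n : ℕ) :
    0 < cCoef η τ q t (n + 1) := by
  have := qnum_nonneg hq n
  rw [cCoef, Nat.add_sub_cancel, qnum_succ']
  positivity

lemma bCoef_eq (n : ℕ) : bCoef η θ τ q t n = aCoef η θ τ q n + cCoef η τ q t n - η⁻¹ := by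
  unfold bCoef aCoef cCoef
  ring

lemma aCoef_add (n k : ℕ) : aCoef η θ τ q (n + k) =
    aCoef η θ τ q k + q ^ k * (qnum q n * (θ + η * τ * (qnum q (n + k) + qnum q k))) := by
  unfold aCoef
  linear_combination (θ + η * τ * (qnum q (n + k) + qnum q k)) * qnum_add q n k

lemma mul_cCoef (n : ℕ) :
    q * cCoef η τ q t n = η * (q * t + τ * (qnum q n - 1)) * qnum q n := by
  unfold cCoef
  linear_combination η * τ * mul_qnum_pred_mul_qnum q n

lemma xPt_zero : xPt η θ τ q t 0 = -η⁻¹ := by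
  simp [xPt, qnum_zero]

lemma xPt_eq (hq : q ≠ 0) (k : ℕ) :
    xPt η θ τ q t k = t * η * qnum q k - aCoef η θ τ q k / q ^ k := by
  unfold xPt aCoef
  field_simp
  ring

lemma xPt_add_aCoef_div (hq : q ≠ 0) (n k : ℕ) :
    xPt η θ τ q t k + aCoef η θ τ q (n + k) / q ^ k =
      t * η * qnum q k + qnum q n * (θ + η * τ * (qnum q (n + k) + qnum q k)) := by
  rw [xPt_eq hq, aCoef_add, add_div, mul_div_cancel_left₀ _ (pow_ne_zero k hq)]
  ring

lemma xPt_christoffel (hq : q ≠ 0) (k n : ℕ) :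
    xPt η θ τ q t (k + 1) + aCoef η θ τ q (n + (k + 1)) / q ^ (k + 1)
        + q ^ (k + 1) * cCoef η τ q t n =
      xPt η θ τ q t k + aCoef η θ τ q (n + k) / q ^ k + q ^ k * cCoef η τ q t (n + 1) := by
  have hc : cCoef η τ q t (n + 1) = η * (t + τ * qnum q n) * qnum q (n + 1) := by
    rw [cCoef, Nat.add_sub_cancel]
  rw [xPt_add_aCoef_div hq, xPt_add_aCoef_div hq, hc, ← add_assoc, qnum_succ q (n + k),
    qnum_succ q k, qnum_succ' q n, pow_succ, pow_add]
  linear_combination q ^ k * mul_cCoef (η := η) (τ := τ) (q := q) (t := t) n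
    + η * τ * q ^ k * qnum q n * (qnum_succ' q n - qnum_succ q n)

lemma isBigO_qnum (hq0 : 0 ≤ q) (hq1 : q ≤ 1) : qnum q =O[atTop] fun n => (n : ℝ) :=
  .of_norm_le fun n => by
    simpa [abs_of_nonneg (qnum_nonneg hq0 n)] using qnum_le hq0 hq1 n

lemma isBigO_aCoef (hq0 : 0 ≤ q) (hq1 : q ≤ 1) :
    aCoef η θ τ q =O[atTop] fun n => (n : ℝ) ^ 2 := by
  have hconst := (isBigO_const_natCast η⁻¹).mul (isBigO_const_natCast 1)
  have hlin := (isBigO_const_natCast θ).mul (isBigO_qnum hq0 hq1)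
  have hquad := ((isBigO_qnum hq0 hq1).const_mul_left (η * τ)).mul (isBigO_qnum hq0 hq1)
  refine ((hconst.add hlin).add hquad).congr (fun n => ?_) fun n => (sq _).symm
  unfold aCoef
  ring

lemma isBigO_cCoef (hq0 : 0 ≤ q) (hq1 : q ≤ 1) :
    cCoef η τ q t =O[atTop] fun n => (n : ℝ) ^ 2 := by
  have hpred : (fun n => qnum q (n - 1)) =O[atTop] fun n => (n : ℝ) := .of_norm_le fun n => by
    rw [Real.norm_of_nonneg (qnum_nonneg hq0 _)]
    exact (qnum_le hq0 hq1 (n - 1)).trans (Nat.cast_le.2 (n.sub_le 1))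
  exact ((((isBigO_const_natCast t).add (hpred.const_mul_left τ)).const_mul_left η).mul
    (isBigO_qnum hq0 hq1)).congr_right fun n => (sq _).symm

lemma eval_birthDeathPoly_eq_neg_one_pow_mul {p : ℕ → ℝ → ℝ} (ha : ∀ n, aCoef η θ τ q n ≠ 0)
    (hp0 : ∀ y, p 0 y = 1)
    (hprec : ∀ (n : ℕ) (y : ℝ), y * p n y = aCoef η θ τ q n * p (n + 1) y
      + bCoef η θ τ q t n * p n y + cCoef η τ q t n * p (n - 1) y) (n : ℕ) (y : ℝ) :
    (birthDeathPoly (aCoef η θ τ q) (cCoef η τ q t) (xPt η θ τ q t 0) n).eval y =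
      (-1) ^ n * p n y := by
  refine (eq_eval_birthDeathPoly (F := fun n => (-1) ^ n * p n y) ha ?_ (fun n => ?_) n).symm
  · rw [pow_zero, hp0, one_mul]
  · have hpred : cCoef η τ q t n * (-1) ^ (n - 1) = -(cCoef η τ q t n * (-1) ^ n) := by
      cases n with
      | zero => simp only [cCoef_zero, zero_mul, neg_zero]
      | succ n => rw [Nat.add_sub_cancel, pow_succ, mul_neg_one, mul_neg, neg_neg]
    rw [xPt_zero]
    linear_combination -(-1) ^ n * hprec n y - (-1) ^ n * p n y * bCoef_eq (η := η) n
      - p (n - 1) y * hpred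

lemma Represents.isOrthogonalFamily_birthDeathPoly {μ : Measure ℝ} {L : ℝ[X] →ₗ[ℝ] ℝ}
    (hμ : Represents μ L) {p : ℕ → ℝ → ℝ} (ha : ∀ n, aCoef η θ τ q n ≠ 0) (hp0 : ∀ y, p 0 y = 1)
    (hprec : ∀ (n : ℕ) (y : ℝ), y * p n y = aCoef η θ τ q n * p (n + 1) y
      + bCoef η θ τ q t n * p n y + cCoef η τ q t n * p (n - 1) y)
    (horth : ∀ m n, m ≠ n → ∫ y, p m y * p n y ∂μ = 0) :
    IsOrthogonalFamily L
      (birthDeathPoly (aCoef η θ τ q) (cCoef η τ q t) (xPt η θ τ q t 0)) := by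
  intro m n hmn
  have heval (y : ℝ) : (birthDeathPoly (aCoef η θ τ q) (cCoef η τ q t) (xPt η θ τ q t 0) m *
      birthDeathPoly (aCoef η θ τ q) (cCoef η τ q t) (xPt η θ τ q t 0) n).eval y =
      (-1) ^ m * (-1) ^ n * (p m y * p n y) := by
    rw [eval_mul, eval_birthDeathPoly_eq_neg_one_pow_mul ha hp0 hprec,
      eval_birthDeathPoly_eq_neg_one_pow_mul ha hp0 hprec, mul_mul_mul_comm]
  simp only [← hμ.integral_eval, heval, integral_const_mul, horth m n hmn, mul_zero]

end Coefficients

end BirthDeath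

theorem stmt14_general {η θ τ q t : ℝ} (hq0 : 0 < q) (hq1 : q ≤ 1)
    (ha : ∀ n, 0 < aCoef η θ τ q n) (hc : ∀ n, 0 < cCoef η τ q t (n + 1))
    {p : ℕ → ℝ → ℝ} (hp0 : ∀ y : ℝ, p 0 y = 1)
    (hprec : ∀ (n : ℕ) (y : ℝ), y * p n y =
      aCoef η θ τ q n * p (n + 1) y + bCoef η θ τ q t n * p n y
        + cCoef η τ q t n * p (n - 1) y)
    {μ : Measure ℝ} (hmom : ∀ n : ℕ, Integrable (fun y : ℝ => |y| ^ n) μ)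
    (horth : ∀ m n : ℕ, m ≠ n → ∫ y, p m y * p n y ∂μ = 0) (k : ℕ) :
    μ (((⋃ j ∈ Set.Iic k, {xPt η θ τ q t j}) ∪
        Set.Ici (max (xPt η θ τ q t k) (xPt η θ τ q t (k + 1))))ᶜ) = 0 := by
  obtain ⟨L, hμ⟩ := exists_represents hmom
  have hL := hμ.isOrthogonalFamily_birthDeathPoly (fun n => (ha n).ne') hp0 hprec horth
  have hnull := measure_Iio_diff_image_eq_zero hq0 ha cCoef_zero hc (xPt_christoffel hq0.ne')
    (not_summable_mul_rpow_neg_quarter ha hc (isBigO_aCoef hq0.le hq1)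
      (isBigO_cCoef hq0.le hq1)) hμ hL
  refine measure_mono_null (fun y hy => ?_) (measure_union_null (hnull k) (hnull (k + 1)))
  simp only [Set.mem_compl_iff, Set.mem_union, Set.mem_iUnion, Set.mem_singleton_iff, not_or,
    Set.mem_Ici, not_le, lt_max_iff, not_exists] at hy
  obtain ⟨hne, hlt⟩ := hy
  refine hlt.imp (fun h => ⟨h, ?_⟩) fun h => ⟨h, ?_⟩
  · rintro ⟨j, hj, rfl⟩
    exact hne j (Set.mem_Iio.1 hj).le rfl
  · rintro ⟨j, hj, rfl⟩
    exact hne j (Nat.lt_succ_iff.1 hj) rfl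

/-- for `0 < q ≤ 1`, `η > 0`, `θ ≥ 0`, `τ ≥ 0` and `t > θ/η + (1-q)/η²`, any
orthogonality measure `μ_t` of `{p_n(·;t)}` satisfies
`μ_t(ℝ \ ({x_0(t), …, x_{k_*}(t)} ∪ [y_*, ∞))) = 0`, where `k_*` is the largest `k` with
`t > θ/η + 2τk` (if `q = 1`), resp. with
`q^{2k} > ((1-q)² + (1-q)ηθ + η²τ)/(η²(t(1-q)+τ))` (if `q < 1`), and
`y_* = max(x_{k_*}(t), x_{k_*+1}(t))`. -/
theorem stmt14 (η θ τ q t : ℝ)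
    (hq0 : 0 < q) (hq1 : q ≤ 1) (hη : 0 < η) (hθ : 0 ≤ θ) (hτ : 0 ≤ τ)
    (ht : θ / η + (1 - q) / η ^ 2 < t)
    (p : ℕ → ℝ → ℝ)
    (hp0 : ∀ y : ℝ, p 0 y = 1)
    (hprec : ∀ (n : ℕ) (y : ℝ), y * p n y =
      aCoef η θ τ q n * p (n + 1) y + bCoef η θ τ q t n * p n y
        + cCoef η τ q t n * p (n - 1) y)
    (μ : Measure ℝ)
    (hprob : IsProbabilityMeasure μ)
    (hmom : ∀ n : ℕ, Integrable (fun y : ℝ => |y| ^ n) μ)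
    (horth : ∀ m n : ℕ, m ≠ n → ∫ y, p m y * p n y ∂μ = 0)
    (kstar : ℕ)
    (hk1 : q = 1 →
      (θ / η + 2 * τ * kstar < t ∧ ∀ k : ℕ, θ / η + 2 * τ * k < t → k ≤ kstar))
    (hklt : q < 1 →
      (((1 - q) ^ 2 + (1 - q) * η * θ + η ^ 2 * τ) / (η ^ 2 * (t * (1 - q) + τ))
          < q ^ (2 * kstar) ∧
        ∀ k : ℕ, ((1 - q) ^ 2 + (1 - q) * η * θ + η ^ 2 * τ) / (η ^ 2 * (t * (1 - q) + τ))
          < q ^ (2 * k) → k ≤ kstar)) :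
    μ (((⋃ j ∈ Set.Iic kstar, {xPt η θ τ q t j}) ∪
        Set.Ici (max (xPt η θ τ q t kstar) (xPt η θ τ q t (kstar + 1))))ᶜ) = 0 :=
  stmt14_general hq0 hq1 (aCoef_pos hq0.le hη hθ hτ)
    (cCoef_pos hq0.le hη hτ ((add_nonneg (div_nonneg hθ hη.le)
      (div_nonneg (sub_nonneg.2 hq1) (sq_nonneg η))).trans_lt ht)) hp0 hprec hmom horth kstar
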